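/- arXiv:2003.05876 — 3 statements merged into one kernel-verified Lean document; each statement's English description precedes it below -/
import Mathlib

section
/- For every integer N ≥ 2 and every real z with |z| < 1, the Bose–Hubbard Hamiltonian H_BH(z) has N distinct real eigenvalues, namely (N−1−2k)·√(1−z²) for k = 0,…,N−1; in particular H_BH(z) is diagonalizable with purely real, simple spectrum throughout the open unitarity interval −1 < z < 1. -/
/-!
Conjugating `H_BH(z)` by the diagonal matrix `diag √(binom(n,k))`, `n = N - 1`, removes the square
roots: the vector `v_k = b_k / √(binom(n,k))` is an eigenvector for `μ` exactly when the polynomial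
`p = ∑ b_k x^k` of degree at most `n` satisfies the first-order equation
`(1 + 2izx - x²) p' + n (x - iz) p = μ p`.
Writing `1 + 2izx - x² = (1 + αx)(1 + βx)` with `α = iz + s`, `β = iz - s`, `s = √(1 - z²)`, the
polynomials `p = (1 + αx)^m (1 + βx)^j` with `m + j = n` solve it with `μ = (m - j) s = (n - 2j) s`
(`eigPoly_ode`, `HBH_mulVec`). For `|z| < 1` these are `N` distinct eigenvalues of an `N × N` matrix,
so the eigenvectors form a basis, which diagonalizes `H_BH(z)` and determines its spectrum.
-/

open Matrix Polynomial Finset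

/-- off-diagonal coupling `√((N−1−k)(k+1))`. -/
noncomputable def gCoup (N k : ℕ) : ℝ := Real.sqrt (((N - 1 - k) * (k + 1) : ℕ))

/-- the non-Hermitian Bose–Hubbard Hamiltonian `H_BH(z)`. -/
noncomputable def HBH (N : ℕ) (z : ℂ) : Matrix (Fin N) (Fin N) ℂ :=
  fun k l =>
    if (k : ℕ) = (l : ℕ) then -Complex.I * (((N : ℤ) - 1 - 2 * (k : ℕ) : ℤ) : ℂ) * z
    else if (l : ℕ) = (k : ℕ) + 1 then (gCoup N k : ℂ)
    else if (k : ℕ) = (l : ℕ) + 1 then (gCoup N l : ℂ)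
    else 0

/-- the EP limit of the discrete anharmonic-oscillator Hamiltonian `H_AO`. -/
noncomputable def HAO (N : ℕ) : Matrix (Fin N) (Fin N) ℂ :=
  fun k l =>
    if (k : ℕ) = (l : ℕ) then -(((N : ℤ) - 1 - 2 * (k : ℕ) : ℤ) : ℂ)
    else if (l : ℕ) = (k : ℕ) + 1 then (gCoup N k : ℂ)
    else if (k : ℕ) = (l : ℕ) + 1 then -(gCoup N l : ℂ)
    else 0

/-- the nilpotent Jordan block `J`. -/
noncomputable def Jmat (N : ℕ) : Matrix (Fin N) (Fin N) ℂ :=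
  fun k l => if (l : ℕ) = (k : ℕ) + 1 then 1 else 0

/-- the Pascal-triangle matrix `P`. -/
noncomputable def Pmat (N : ℕ) : Matrix (Fin N) (Fin N) ℂ :=
  fun m q => ((N - 1 - (m : ℕ)).choose (q : ℕ) : ℂ)

/-- the diagonal factor `D` with `D_{k,k} = i^k·√(binom(N−1,k))`. -/
noncomputable def Dmat (N : ℕ) : Matrix (Fin N) (Fin N) ℂ :=
  Matrix.diagonal fun k => Complex.I ^ (k : ℕ) * (Real.sqrt ((N - 1).choose (k : ℕ)) : ℂ)

/-- the diagonal factor `G` with `G_{k,k} = (−i)^{N−1−k}·(N−1−k)!`. -/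
noncomputable def Gmat (N : ℕ) : Matrix (Fin N) (Fin N) ℂ :=
  Matrix.diagonal fun k => (-Complex.I) ^ (N - 1 - (k : ℕ)) * ((N - 1 - (k : ℕ)).factorial : ℂ)

/-- the Bose–Hubbard transition matrix `Q_BH = D·P·G`. -/
noncomputable def QBH (N : ℕ) : Matrix (Fin N) (Fin N) ℂ := Dmat N * Pmat N * Gmat N

/-- the diagonal factor `C` with `C_{k,k} = √(binom(N−1,k))`. -/
noncomputable def Cmat (N : ℕ) : Matrix (Fin N) (Fin N) ℂ :=
  Matrix.diagonal fun k => (Real.sqrt ((N - 1).choose (k : ℕ)) : ℂ)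

/-- the diagonal factor `F` with `F_{k,k} = (−1)^{N−1−k}·(N−1−k)!`. -/
noncomputable def Fmat (N : ℕ) : Matrix (Fin N) (Fin N) ℂ :=
  Matrix.diagonal fun k => (-1 : ℂ) ^ (N - 1 - (k : ℕ)) * ((N - 1 - (k : ℕ)).factorial : ℂ)

/-- the anharmonic-oscillator transition matrix `Q_AO = C·P·F`. -/
noncomputable def QAO (N : ℕ) : Matrix (Fin N) (Fin N) ℂ := Cmat N * Pmat N * Fmat N

/-- `β = −1 + i`. -/
noncomputable def betaC : ℂ := -1 + Complex.I

/-- the diagonal factor `B` with `B_{k,k} = (−β)^{−k}`. -/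
noncomputable def Bmat (N : ℕ) : Matrix (Fin N) (Fin N) ℂ :=
  Matrix.diagonal fun k => ((-betaC) ^ (k : ℕ))⁻¹

/-- the diagonal factor `A` with `A_{k,k} = β^k`. -/
noncomputable def Amat (N : ℕ) : Matrix (Fin N) (Fin N) ℂ :=
  Matrix.diagonal fun k => betaC ^ (k : ℕ)

/-- the upper-triangular real matrix `R` with
`R_{n,n+q} = √(binom(n+q,n)·binom(N−1−n,q))`. -/
noncomputable def Rmat (N : ℕ) : Matrix (Fin N) (Fin N) ℂ :=
  fun n k =>
    if (n : ℕ) ≤ (k : ℕ) then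
      (Real.sqrt (((k : ℕ).choose (n : ℕ)) * ((N - 1 - (n : ℕ)).choose ((k : ℕ) - (n : ℕ)))) : ℂ)
    else 0

/-- the transition-matrix product `S = B·R·A`. -/
noncomputable def Smat (N : ℕ) : Matrix (Fin N) (Fin N) ℂ := Bmat N * Rmat N * Amat N

/-- the discrete anharmonic-oscillator Hamiltonian `H_AO(γ)` with coupling parameter `γ`. -/
noncomputable def HAOg (N : ℕ) (γ : ℝ) : Matrix (Fin N) (Fin N) ℝ :=
  fun k l =>
    if (k : ℕ) = (l : ℕ) then -((N : ℝ) - 1 - 2 * (k : ℕ))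
    else if (l : ℕ) = (k : ℕ) + 1 then
      Real.sqrt ((((N - 1 - (k : ℕ)) * ((k : ℕ) + 1) : ℕ)) * (1 - γ))
    else if (k : ℕ) = (l : ℕ) + 1 then
      -Real.sqrt ((((N - 1 - (l : ℕ)) * ((l : ℕ) + 1) : ℕ)) * (1 - γ))
    else 0

/-- the exchange (parity) matrix `Π`. -/
noncomputable def PiMat (N : ℕ) : Matrix (Fin N) (Fin N) ℂ :=
  fun k l => if (k : ℕ) + (l : ℕ) = N - 1 then 1 else 0

/-- The generating polynomial `(1 + αx)^m (1 + βx)^j` of a rescaled eigenvector. -/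
noncomputable def eigPoly (α β : ℂ) (m j : ℕ) : ℂ[X] := (1 + C α * X) ^ m * (1 + C β * X) ^ j

/-- The normalising factor `√(binom(n,k))`, which vanishes for `k > n`. -/
noncomputable def binSqrt (n k : ℕ) : ℝ := Real.sqrt (n.choose k)

lemma mul_derivative_linear_pow (α : ℂ) (m : ℕ) :
    (1 + C α * X) * derivative ((1 + C α * X) ^ m) = C (m * α) * (1 + C α * X) ^ m := by
  cases m with
  | zero => simp
  | succ m =>
    rw [derivative_pow]
    simp
    ring

lemma eigPoly_ode (α β : ℂ) (m j : ℕ) :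
    (1 + C α * X) * (1 + C β * X) * derivative (eigPoly α β m j) =
      (C (m * α + j * β) + C ((m + j) * (α * β)) * X) * eigPoly α β m j := by
  have h1 := mul_derivative_linear_pow α m
  have h2 := mul_derivative_linear_pow β j
  unfold eigPoly
  rw [derivative_mul]
  simp only [C_add, C_mul] at *
  linear_combination (1 + C β * X) * (1 + C β * X) ^ j * h1 +
    (1 + C α * X) * (1 + C α * X) ^ m * h2

lemma eigPoly_coeff_zero (α β : ℂ) (m j : ℕ) : (eigPoly α β m j).coeff 0 = 1 := by
  simp [eigPoly, coeff_zero_eq_eval_zero]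

lemma eigPoly_coeff_eq_zero (α β : ℂ) (m j k : ℕ) (hk : m + j < k) :
    (eigPoly α β m j).coeff k = 0 := by
  apply coeff_eq_zero_of_natDegree_lt
  refine lt_of_le_of_lt ?_ hk
  unfold eigPoly
  compute_degree

/-- The three-term recurrence for the coefficients at index `0`. -/
lemma eigPoly_rec_zero (α β : ℂ) (m j : ℕ) :
    (eigPoly α β m j).coeff 1 = (m * α + j * β) * (eigPoly α β m j).coeff 0 := by
  have h := congrArg (fun q => coeff q 0) (eigPoly_ode α β m j)
  simp only [mul_coeff_zero, coeff_derivative] at h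
  simpa using h

/-- The three-term recurrence for the coefficients at index `k + 1`. -/
lemma eigPoly_rec_succ (α β : ℂ) (hαβ : α * β = -1) (m j k : ℕ) :
    ((k : ℂ) + 2) * (eigPoly α β m j).coeff (k + 2) +
        (α + β) * (k + 1) * (eigPoly α β m j).coeff (k + 1) +
        ((m + j : ℂ) - k) * (eigPoly α β m j).coeff k =
      (m * α + j * β) * (eigPoly α β m j).coeff (k + 1) := by
  have h := eigPoly_ode α β m j
  generalize eigPoly α β m j = p at *
  have h' : derivative p + C (α + β) * (X * derivative p) + C (-1) * (X * (X * derivative p)) =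
      C (m * α + j * β) * p + C (-((m : ℂ) + j)) * (X * p) := by
    rw [hαβ] at h
    have e : (C α * C β : ℂ[X]) = C (-1) := by rw [← C_mul, hαβ]
    simp only [C_add, C_mul, C_neg, C_1] at *
    linear_combination h - X ^ 2 * derivative p * e
  have hc := congrArg (fun q => coeff q (k + 1)) h'
  simp only [coeff_add, coeff_C_mul, coeff_X_mul, coeff_derivative] at hc
  have hx : (X * derivative p).coeff k = k * p.coeff k := by
    cases k with
    | zero => simp
    | succ k => rw [coeff_X_mul, coeff_derivative]; push_cast; ring
  rw [hx] at hc
  push_cast at hc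
  linear_combination hc

lemma gCoup_mul_binSqrt (n k : ℕ) :
    gCoup (n + 1) k * binSqrt n k = (k + 1) * binSqrt n (k + 1) := by
  have h := Nat.choose_succ_right_eq n k
  have hk : ((k : ℝ) + 1) = Real.sqrt (((k + 1) * (k + 1) : ℕ)) := by
    push_cast
    rw [Real.sqrt_mul_self (by positivity)]
  unfold gCoup binSqrt
  rw [hk, ← Real.sqrt_mul (by positivity), ← Real.sqrt_mul (by positivity)]
  congr 1
  norm_cast
  rw [Nat.add_sub_cancel]
  calc (n - k) * (k + 1) * n.choose k = (k + 1) * (n.choose k * (n - k)) := by ring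
    _ = (k + 1) * (k + 1) * n.choose (k + 1) := by rw [← h]; ring

lemma gCoup_mul_binSqrt_succ (n k : ℕ) (hk : k ≤ n) :
    gCoup (n + 1) k * binSqrt n (k + 1) = ((n : ℝ) - k) * binSqrt n k := by
  have h := Nat.choose_succ_right_eq n k
  have hk : ((n : ℝ) - k) = Real.sqrt (((n - k) * (n - k) : ℕ)) := by
    push_cast
    rw [Real.sqrt_mul_self (by positivity), Nat.cast_sub hk]
  unfold gCoup binSqrt
  rw [hk, ← Real.sqrt_mul (by positivity), ← Real.sqrt_mul (by positivity)]
  congr 1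
  norm_cast
  rw [Nat.add_sub_cancel]
  linear_combination (n - k) * h

lemma binSqrt_ne_zero (n k : ℕ) (hk : k ≤ n) : (binSqrt n k : ℂ) ≠ 0 := by
  have := Nat.choose_pos hk
  have h : 0 < binSqrt n k := Real.sqrt_pos.2 (by exact_mod_cast this)
  exact_mod_cast h.ne'

/-- The tridiagonal action of `H_BH(z)` on the restriction of a sequence `w`. The upper neighbour
needs no boundary case because the coupling vanishes at the last index. -/
lemma HBH_mulVec_apply (n : ℕ) (z : ℂ) (w : ℕ → ℂ) (k : Fin (n + 1)) :
    (HBH (n + 1) z *ᵥ fun l => w l) k =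
      -Complex.I * ((n : ℂ) - 2 * (k : ℕ)) * z * w k + gCoup (n + 1) k * w (k + 1) +
        (if (k : ℕ) = 0 then 0 else gCoup (n + 1) (k - 1) * w (k - 1)) := by
  obtain ⟨k, hk⟩ := k
  simp only [mulVec, dotProduct, HBH]
  rw [Fin.sum_univ_eq_sum_range (fun l => (if k = l then
    -Complex.I * ((((n + 1 : ℕ) : ℤ) - 1 - 2 * (k : ℕ) : ℤ) : ℂ) * z
    else if l = k + 1 then (gCoup (n + 1) k : ℂ)
    else if k = l + 1 then (gCoup (n + 1) l : ℂ)
    else 0) * w l) (n + 1)]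
  have hsplit : ∀ l ∈ range (n + 1), (if k = l then
    -Complex.I * ((((n + 1 : ℕ) : ℤ) - 1 - 2 * (k : ℕ) : ℤ) : ℂ) * z
    else if l = k + 1 then (gCoup (n + 1) k : ℂ)
    else if k = l + 1 then (gCoup (n + 1) l : ℂ)
    else 0) * w l = (if l = k then -Complex.I * ((n : ℂ) - 2 * k) * z * w k else 0) +
      (if l = k + 1 then gCoup (n + 1) k * w (k + 1) else 0) +
      (if l = k - 1 then (if k = 0 then 0 else gCoup (n + 1) (k - 1) * w (k - 1)) else 0) := by
    intro l _
    by_cases h1 : l = k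
    · subst h1
      by_cases h0 : l = 0
      · subst h0; simp
      · have : l ≠ l - 1 := by omega
        simp [this]
    · by_cases h2 : l = k + 1
      · subst h2
        have : k + 1 ≠ k - 1 := by omega
        simp [this]
      · by_cases h3 : k = l + 1
        · subst h3
          have : l ≠ l + 1 + 1 := by omega
          simp [this]
        · by_cases h0 : k = 0
          · subst h0
            simp [h1, h2, Ne.symm h1]
          · have : l ≠ k - 1 := by omega
            simp [h1, h2, h3, this, Ne.symm h1]
  rw [Finset.sum_congr rfl hsplit, sum_add_distrib, sum_add_distrib, sum_ite_eq', sum_ite_eq',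
    sum_ite_eq']
  have hk1 : k - 1 < n + 1 := by omega
  simp only [mem_range, hk, hk1, if_true]
  by_cases hkn : k + 1 < n + 1
  · simp [hkn]
  · have : k = n := by omega
    subst this
    simp [gCoup]

/-- The eigenvector with `v_k = b_k / √(binom(n,k))`, where `b_k` are the coefficients
of `(1 + (iz+s)x)^(n-j) (1 + (iz-s)x)^j`. -/
noncomputable def eigVec (n : ℕ) (z s : ℂ) (j k : ℕ) : ℂ :=
  (eigPoly (Complex.I * z + s) (Complex.I * z - s) (n - j) j).coeff k / binSqrt n k

lemma HBH_mulVec (n : ℕ) (z s : ℂ) (hs : s ^ 2 = 1 - z ^ 2) (j : ℕ) (hj : j ≤ n) :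
    (HBH (n + 1) z *ᵥ fun l : Fin (n + 1) => eigVec n z s j l) =
      (((n : ℂ) - 2 * j) * s) • fun l : Fin (n + 1) => eigVec n z s j l := by
  ext k
  rw [HBH_mulVec_apply]
  obtain ⟨k, hk⟩ := k
  have hk' : k ≤ n := by omega
  have hαβ : (Complex.I * z + s) * (Complex.I * z - s) = -1 := by
    linear_combination z ^ 2 * Complex.I_sq - hs
  have hcast : ((n - j : ℕ) : ℂ) = n - j := Nat.cast_sub hj
  have hr0 := eigPoly_rec_zero (Complex.I * z + s) (Complex.I * z - s) (n - j) j
  have hr := eigPoly_rec_succ _ _ hαβ (n - j) j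
  have hd := eigPoly_coeff_eq_zero (Complex.I * z + s) (Complex.I * z - s) (n - j) j (n + 1)
    (by omega)
  simp only [Pi.smul_apply, smul_eq_mul, eigVec]
  generalize eigPoly (Complex.I * z + s) (Complex.I * z - s) (n - j) j = p at *
  rw [hcast] at hr0 hr
  have hc := binSqrt_ne_zero n k hk'
  have hup : (gCoup (n + 1) k : ℂ) * (p.coeff (k + 1) / binSqrt n (k + 1)) =
      (k + 1) * p.coeff (k + 1) / binSqrt n k := by
    rcases hk'.lt_or_eq with h | h
    · have hc1 := binSqrt_ne_zero n (k + 1) h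
      have e : (gCoup (n + 1) k : ℂ) * binSqrt n k = (k + 1) * binSqrt n (k + 1) := by
        exact_mod_cast gCoup_mul_binSqrt n k
      rw [mul_div_assoc', div_eq_div_iff hc1 hc]
      linear_combination p.coeff (k + 1) * e
    · subst h
      simp [hd]
  rw [hup]
  cases k with
  | zero =>
    simp only [if_true]
    field_simp
    push_cast
    simp only [zero_add] at *
    linear_combination hr0
  | succ k =>
    have hc0 := binSqrt_ne_zero n k (by omega)
    have hdown : (gCoup (n + 1) k : ℂ) * (p.coeff k / binSqrt n k) =
        (n - k) * p.coeff k / binSqrt n (k + 1) := by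
      have e : (gCoup (n + 1) k : ℂ) * binSqrt n (k + 1) = (n - k) * binSqrt n k := by
        exact_mod_cast gCoup_mul_binSqrt_succ n k (by omega)
      rw [mul_div_assoc', div_eq_div_iff hc0 hc]
      linear_combination p.coeff k * e
    rw [if_neg (Nat.succ_ne_zero k), Nat.add_sub_cancel, hdown]
    field_simp
    push_cast
    linear_combination hr k

/-- for `N ≥ 2` and real `|z| < 1`, `H_BH(z)` has the `N` distinct
real eigenvalues `(N−1−2k)·√(1−z²)` and is diagonalizable. -/
theorem bh_real_simple_spectrum (N : ℕ) (hN : 2 ≤ N) (z : ℝ) (hz : |z| < 1) :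
    Function.Injective
        (fun k : Fin N => ((((N : ℝ) - 1 - 2 * (k : ℕ)) * Real.sqrt (1 - z ^ 2) : ℝ) : ℂ)) ∧
      spectrum ℂ (HBH N (z : ℂ)) =
        Set.range
          (fun k : Fin N => ((((N : ℝ) - 1 - 2 * (k : ℕ)) * Real.sqrt (1 - z ^ 2) : ℝ) : ℂ)) ∧
      ∃ (T : Matrix (Fin N) (Fin N) ℂ) (d : Fin N → ℂ),
        IsUnit T ∧ HBH N (z : ℂ) = T * Matrix.diagonal d * T⁻¹ := by
  obtain ⟨n, rfl⟩ : ∃ n, N = n + 1 := ⟨N - 1, by omega⟩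
  have hz2 : 0 < 1 - z ^ 2 := by
    have := (sq_lt_one_iff_abs_lt_one z).2 hz
    linarith
  have hspos : 0 < Real.sqrt (1 - z ^ 2) := Real.sqrt_pos.2 hz2
  have hs2 : Real.sqrt (1 - z ^ 2) ^ 2 = 1 - z ^ 2 := Real.sq_sqrt hz2.le
  generalize Real.sqrt (1 - z ^ 2) = s at *
  set d : Fin (n + 1) → ℂ :=
    fun k => (((((n + 1 : ℕ) : ℝ) - 1 - 2 * (k : ℕ)) * s : ℝ) : ℂ) with hd
  have hinj : Function.Injective d := by
    intro a b hab
    have h := mul_right_cancel₀ hspos.ne' (Complex.ofReal_injective hab)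
    have h' : ((a : ℕ) : ℝ) = (b : ℕ) := by linarith
    exact Fin.ext (by exact_mod_cast h')
  let v : Fin (n + 1) → Fin (n + 1) → ℂ := fun j k => eigVec n z s j k
  have hv : ∀ j, HBH (n + 1) (z : ℂ) *ᵥ v j = d j • v j := by
    intro j
    have hj : d j = ((n : ℂ) - 2 * (j : ℕ)) * s := by simp [hd]
    rw [hj]
    exact HBH_mulVec n z s (by exact_mod_cast hs2) j (by omega)
  have hv0 : ∀ j, v j ≠ 0 := by
    intro j h
    have h0 := congrFun h 0
    simp [v, eigVec, eigPoly_coeff_zero, binSqrt] at h0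
  have hli : LinearIndependent ℂ v := by
    apply Module.End.eigenvectors_linearIndependent' (Matrix.toLin' (HBH (n + 1) (z : ℂ))) d hinj
    intro j
    rw [Module.End.hasEigenvector_iff, Module.End.mem_eigenspace_iff]
    exact ⟨by rw [Matrix.toLin'_apply]; exact hv j, hv0 j⟩
  -- The columns of `T` are the eigenvectors.
  let T : Matrix (Fin (n + 1)) (Fin (n + 1)) ℂ := (Matrix.of v)ᵀ
  have hT : IsUnit T := by
    rw [← Matrix.linearIndependent_cols_iff_isUnit]
    exact hli
  have hHT : HBH (n + 1) (z : ℂ) * T = T * Matrix.diagonal d := by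
    ext i j
    have h := congrFun (hv j) i
    rw [Matrix.mul_diagonal]
    simpa [T, Matrix.mul_apply, mulVec, dotProduct, mul_comm] using h
  have hdet : IsUnit T.det := (Matrix.isUnit_iff_isUnit_det T).1 hT
  have hH : HBH (n + 1) (z : ℂ) = T * Matrix.diagonal d * T⁻¹ := by
    rw [← hHT, Matrix.mul_nonsing_inv_cancel_right _ _ hdet]
  refine ⟨hinj, ?_, T, d, hT, hH⟩
  rw [hH]
  have hconj := spectrum.units_conjugate (R := ℂ) (a := Matrix.diagonal d) (u := hT.unit)
  rw [Matrix.coe_units_inv, IsUnit.unit_spec, spectrum_diagonal] at hconj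
  exact hconj
end

section
/- For every integer N ≥ 1 and every real γ with 0 ≤ γ ≤ 1, the characteristic polynomial of the parametrized anharmonic-oscillator Hamiltonian H_AO(γ) equals ∏_{k=0}^{N−1} (X − (N−1−2k)·√γ); in particular all eigenvalues of H_AO(γ) are real, they are simple for 0 < γ ≤ 1 and N ≥ 2, and they all collapse to 0 at the exceptional point γ = 0. -/
/-!
Write `N = n + 1`, `r = √(1 - γ)`, `s = √γ`. Conjugating `H_AO(γ)` by the diagonal matrix with
entries `√(n.choose k)` gives the matrix `kacMat n r` of the differential operator
`p ↦ (r + 2x + r x²) p' - n (1 + r x) p` on real polynomials of degree at most `n`, in the monomial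
basis. Since `r² + s² = 1`, the number `-r / (1 + s)` is a root of `r + 2x + r x²`, and in the
shifted variable `y = x + r / (1 + s)` the operator becomes
`y ^ k ↦ (2k - n) s y ^ k + r (k - n) y ^ (k + 1)`. Its matrix `shiftMat n r s` in the basis `y ^ k`
is lower triangular with diagonal `(2k - n) s`, from which the characteristic polynomial is read off.
The root is written with the denominator `1 + s` so that no case distinction at `γ = 1` is needed.
-/

open Matrix Polynomial Finset

/-- The matrix of `p ↦ (r + 2x + r x²) p' - n (1 + r x) p` on polynomials of degree at most `n`,
in the basis `x ^ k`. The three cases are disjoint, so the sum is a case distinction. -/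
noncomputable def kacMat (n : ℕ) (r : ℝ) : Matrix (Fin (n + 1)) (Fin (n + 1)) ℝ :=
  fun k l =>
    (if (l : ℕ) = k then 2 * (k : ℝ) - n else 0)
      + (if (l : ℕ) = k + 1 then ((k : ℝ) + 1) * r else 0)
      + (if (k : ℕ) = l + 1 then -((n : ℝ) - l) * r else 0)

/-- The matrix of the same operator in a basis `(x - a) ^ k`, where `a` is a root of
`r + 2x + r x²` and `r * a + 1 = s`. -/
noncomputable def shiftMat (n : ℕ) (r s : ℝ) : Matrix (Fin (n + 1)) (Fin (n + 1)) ℝ :=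
  fun k l =>
    (if (k : ℕ) = l then (2 * (l : ℝ) - n) * s else 0)
      + (if (k : ℕ) = l + 1 then ((l : ℝ) - n) * r else 0)

/-- The matrix expressing the basis `(x - a) ^ k` in the basis `x ^ j`. -/
noncomputable def pascalMat (n : ℕ) (a : ℝ) : Matrix (Fin (n + 1)) (Fin (n + 1)) ℝ :=
  fun j k => ((X - C a) ^ (k : ℕ) : ℝ[X]).coeff j

lemma coeff_shift_pow_eq_zero (a : ℝ) {j k : ℕ} (h : k < j) :
    ((X - C a) ^ k : ℝ[X]).coeff j = 0 := by
  apply coeff_eq_zero_of_natDegree_lt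
  rwa [(monic_X_sub_C a).natDegree_pow, natDegree_X_sub_C, mul_one]

lemma pascalMat_det (n : ℕ) (a : ℝ) : (pascalMat n a).det = 1 := by
  rw [Matrix.det_of_isUpperTriangular]
  · refine Finset.prod_eq_one fun k _ => ?_
    have h := (monic_X_sub_C a).pow (k : ℕ)
    have h' := h.coeff_natDegree
    rwa [(monic_X_sub_C a).natDegree_pow, natDegree_X_sub_C, mul_one] at h'
  · intro j k hjk
    exact coeff_shift_pow_eq_zero a hjk

/-- The action of the differential operator on `(x - a) ^ k`. -/
lemma diffOp_shift_pow (n k : ℕ) {r s a : ℝ} (hs : r * a + 1 = s)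
    (ha : r + 2 * a + r * a ^ 2 = 0) :
    (C r + C 2 * X + C r * X ^ 2) * derivative ((X - C a) ^ k)
        - C (n : ℝ) * (1 + C r * X) * (X - C a) ^ k
      = C ((2 * (k : ℝ) - n) * s) * (X - C a) ^ k
        + C (((k : ℝ) - n) * r) * (X - C a) ^ (k + 1) := by
  have hq : (C r + C 2 * X + C r * X ^ 2 : ℝ[X])
      = (X - C a) * (C r * (X - C a) + C (2 * s)) := by
    have h := congrArg (C : ℝ → ℝ[X]) ha
    subst hs
    simp only [map_add, map_mul, map_pow, map_zero, map_one, C_ofNat] at h ⊢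
    linear_combination h
  have hd : (X - C a) * derivative ((X - C a) ^ k) = C (k : ℝ) * (X - C a) ^ k := by
    cases k with
    | zero => simp
    | succ k => rw [derivative_X_sub_C_pow]; simp; ring
  have hl : (1 + C r * X : ℝ[X]) = C s + C r * (X - C a) := by
    subst hs
    simp only [map_add, map_mul, map_one]
    ring
  rw [hq, hl, pow_succ]
  simp only [map_sub, map_mul, C_ofNat]
  linear_combination (C r * (X - C a) + 2 * C s) * hd

/-- `diffOp_shift_pow` read off coefficientwise. -/
lemma kacMat_mul_pascalMat (n : ℕ) {r s a : ℝ} (hs : r * a + 1 = s)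
    (ha : r + 2 * a + r * a ^ 2 = 0) :
    kacMat n r * pascalMat n a = pascalMat n a * shiftMat n r s := by
  ext ⟨j, hj⟩ ⟨k, hk⟩
  have key := congrArg (fun p => coeff p j) (diffOp_shift_pow n k hs ha)
  have htop : ∀ i, n < i → ((X - C a) ^ k : ℝ[X]).coeff i = 0 :=
    fun i hi => coeff_shift_pow_eq_zero a (by omega)
  simp only [Matrix.mul_apply, kacMat, shiftMat, pascalMat]
  have e1 : ∑ x : Fin (n + 1), ((if (x : ℕ) = j then 2 * (j : ℝ) - n else 0)
      + (if (x : ℕ) = j + 1 then ((j : ℝ) + 1) * r else 0)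
      + (if j = (x : ℕ) + 1 then -((n : ℝ) - x) * r else 0)) * ((X - C a) ^ k : ℝ[X]).coeff x
      = (2 * (j : ℝ) - n) * ((X - C a) ^ k : ℝ[X]).coeff j
        + ((j : ℝ) + 1) * r * ((X - C a) ^ k : ℝ[X]).coeff (j + 1)
        + (if j = 0 then 0 else
            -((n : ℝ) - (j - 1 : ℕ)) * r * ((X - C a) ^ k : ℝ[X]).coeff (j - 1)) := by
    rw [Fin.sum_univ_eq_sum_range (fun x : ℕ => ((if x = j then 2 * (j : ℝ) - n else 0)
      + (if x = j + 1 then ((j : ℝ) + 1) * r else 0)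
      + (if j = x + 1 then -((n : ℝ) - x) * r else 0)) * ((X - C a) ^ k : ℝ[X]).coeff x)]
    simp only [add_mul, ite_mul, zero_mul, Finset.sum_add_distrib, Finset.sum_ite_eq',
      Finset.mem_range, hj, if_true]
    congr 1
    · congr 1
      split_ifs with h
      · rfl
      · simp [htop (j + 1) (by omega)]
    · cases j with
      | zero => simp
      | succ j =>
        simp only [add_left_inj, Finset.sum_ite_eq, Finset.mem_range]
        simp [show j < n + 1 by omega]
  have e2 : ∑ x : Fin (n + 1), ((X - C a) ^ (x : ℕ) : ℝ[X]).coeff j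
        * ((if (x : ℕ) = k then (2 * (k : ℝ) - n) * s else 0)
          + (if (x : ℕ) = k + 1 then ((k : ℝ) - n) * r else 0))
      = ((2 * (k : ℝ) - n) * s) * ((X - C a) ^ k : ℝ[X]).coeff j
        + (((k : ℝ) - n) * r) * ((X - C a) ^ (k + 1) : ℝ[X]).coeff j := by
    rw [Fin.sum_univ_eq_sum_range (fun x : ℕ => ((X - C a) ^ x : ℝ[X]).coeff j
        * ((if x = k then (2 * (k : ℝ) - n) * s else 0)
          + (if x = k + 1 then ((k : ℝ) - n) * r else 0)))]
    simp only [mul_add, mul_ite, mul_zero, Finset.sum_add_distrib, Finset.sum_ite_eq',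
      Finset.mem_range, hk, if_true]
    congr 1
    · ring
    · split_ifs with h
      · ring
      · have : k = n := by omega
        subst this
        simp
  rw [e1, e2]
  simp only [coeff_add, coeff_C_mul] at key
  rw [← key]
  generalize ((X - C a) ^ k : ℝ[X]) = p
  have expand : (C r + C 2 * X + C r * X ^ 2) * derivative p - C (n : ℝ) * (1 + C r * X) * p
      = C r * derivative p + C 2 * (X * derivative p) + C r * (X * (X * derivative p))
        - (C (n : ℝ) * p + C (n * r) * (X * p)) := by
    simp only [map_mul]
    ring
  rw [expand]
  rcases j with _ | _ | j <;>
    simp only [coeff_add, coeff_sub, coeff_C_mul, coeff_X_mul, coeff_X_mul_zero,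
      coeff_derivative] <;> simp <;> ring

/-- The similarity `H_AO(γ) = D * kacMat * D⁻¹` with `D = diag (√(n.choose k))⁻¹`, in the
division-free form `D⁻¹ * H_AO(γ) = kacMat * D⁻¹`. -/
lemma diagonal_mul_HAOg (n : ℕ) {γ : ℝ} :
    Matrix.diagonal (fun k : Fin (n + 1) => √((n.choose k : ℕ) : ℝ)) * HAOg (n + 1) γ
      = kacMat n √(1 - γ) * Matrix.diagonal (fun k : Fin (n + 1) => √((n.choose k : ℕ) : ℝ)) := by
  -- The ratio of neighbouring binomial coefficients turns the symmetric coupling into the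
  -- unsymmetric ones of `kacMat`.
  have up : ∀ k, √((n.choose k : ℕ) : ℝ) * √(((n - k) * (k + 1) : ℕ) : ℝ)
      = (k + 1) * √((n.choose (k + 1) : ℕ) : ℝ) := by
    intro k
    have h : n.choose k * ((n - k) * (k + 1)) = (k + 1) ^ 2 * n.choose (k + 1) := by
      have := Nat.choose_succ_right_eq n k
      calc n.choose k * ((n - k) * (k + 1)) = (n.choose k * (n - k)) * (k + 1) := by ring
        _ = (k + 1) ^ 2 * n.choose (k + 1) := by rw [← this]; ring
    have h' : (n.choose k : ℝ) * (((n - k) * (k + 1) : ℕ) : ℝ)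
        = ((k : ℝ) + 1) ^ 2 * n.choose (k + 1) := by exact_mod_cast h
    rw [← Real.sqrt_mul (by positivity), h', Real.sqrt_mul (by positivity),
      Real.sqrt_sq (by positivity)]
  have down : ∀ k, k ≤ n → √((n.choose (k + 1) : ℕ) : ℝ) * √(((n - k) * (k + 1) : ℕ) : ℝ)
      = ((n : ℝ) - k) * √((n.choose k : ℕ) : ℝ) := by
    intro k hk
    have h : n.choose (k + 1) * ((n - k) * (k + 1)) = (n - k) ^ 2 * n.choose k := by
      have := Nat.choose_succ_right_eq n k
      calc n.choose (k + 1) * ((n - k) * (k + 1))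
          = (n.choose (k + 1) * (k + 1)) * (n - k) := by ring
        _ = (n - k) ^ 2 * n.choose k := by rw [this]; ring
    have h' : (n.choose (k + 1) : ℝ) * (((n - k) * (k + 1) : ℕ) : ℝ)
        = ((n - k : ℕ) : ℝ) ^ 2 * n.choose k := by exact_mod_cast h
    rw [← Real.sqrt_mul (by positivity), h', Real.sqrt_mul (by positivity),
      Real.sqrt_sq (by positivity), Nat.cast_sub hk]
  ext ⟨k, hk⟩ ⟨l, hl⟩
  rw [Matrix.diagonal_mul, Matrix.mul_diagonal]
  simp only [HAOg, kacMat, Nat.add_sub_cancel]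
  by_cases h1 : k = l
  · subst h1
    simp
    ring
  by_cases h2 : l = k + 1
  · subst h2
    rw [if_neg (by omega), if_pos rfl, if_neg (by omega), if_pos rfl, if_neg (by omega),
      Real.sqrt_mul (by positivity)]
    linear_combination √(1 - γ) * up k
  by_cases h3 : k = l + 1
  · subst h3
    rw [if_neg (by omega), if_neg (by omega), if_pos rfl, if_neg (by omega), if_neg (by omega),
      if_pos rfl, Real.sqrt_mul (by positivity)]
    linear_combination -√(1 - γ) * down l (by omega)
  · simp [h1, h2, h3, Ne.symm h1]

lemma charpoly_eq_of_mul_eq_mul {m : Type*} [Fintype m] [DecidableEq m] {A B T : Matrix m m ℝ}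
    (hT : T.det ≠ 0) (h : T * A = B * T) : A.charpoly = B.charpoly := by
  have hu : IsUnit T := (Matrix.isUnit_iff_isUnit_det T).2 hT.isUnit
  obtain ⟨u, rfl⟩ := hu
  have : B = u.val * A * u⁻¹.val := by
    rw [h, mul_assoc, Units.mul_inv, mul_one]
  rw [this, Matrix.coe_units_inv, Matrix.charpoly_units_conj]

lemma shiftMat_charpoly (n : ℕ) (r s : ℝ) :
    (shiftMat n r s).charpoly = ∏ k : Fin (n + 1), (X - C ((2 * ((k : ℕ) : ℝ) - n) * s)) := by
  rw [← Matrix.charpoly_transpose, Matrix.charpoly_of_isUpperTriangular]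
  · simp [shiftMat]
  · intro i j hij
    have : (j : ℕ) < i := hij
    simp only [Matrix.transpose_apply, shiftMat]
    rw [if_neg (by omega), if_neg (by omega), add_zero]

/-- the characteristic polynomial of `H_AO(γ)` is
`∏_{k=0}^{N−1} (X − (N−1−2k)·√γ)` for `0 ≤ γ ≤ 1`; the roots are simple for
`0 < γ ≤ 1`, `N ≥ 2`, and all collapse to `0` at `γ = 0`. -/
theorem ao_charpoly (N : ℕ) (hN : 1 ≤ N) (γ : ℝ) (h0 : 0 ≤ γ) (h1 : γ ≤ 1) :
    (HAOg N γ).charpoly =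
        ∏ k ∈ Finset.range N, (X - C (((N : ℝ) - 1 - 2 * k) * Real.sqrt γ)) ∧
      (0 < γ → 2 ≤ N →
        Function.Injective
          (fun k : Fin N => ((N : ℝ) - 1 - 2 * (k : ℕ)) * Real.sqrt γ)) ∧
      (γ = 0 → ∀ k : Fin N, ((N : ℝ) - 1 - 2 * (k : ℕ)) * Real.sqrt γ = 0) := by
  refine ⟨?_, ?_, ?_⟩
  · obtain ⟨n, rfl⟩ : ∃ n, N = n + 1 := ⟨N - 1, by omega⟩
    have hD : (Matrix.diagonal (fun k : Fin (n + 1) => √((n.choose k : ℕ) : ℝ))).det ≠ 0 := by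
      rw [Matrix.det_diagonal]
      refine Finset.prod_ne_zero_iff.2 fun k _ => ?_
      have : 0 < n.choose k := Nat.choose_pos (by omega)
      positivity
    have hs : √γ ^ 2 = γ := Real.sq_sqrt h0
    have hr : √(1 - γ) ^ 2 = 1 - γ := Real.sq_sqrt (by linarith)
    have hpos : 1 + √γ ≠ 0 := by positivity
    have ha1 : √(1 - γ) * (-√(1 - γ) / (1 + √γ)) + 1 = √γ := by
      field_simp
      linear_combination -hs - hr
    have ha2 : √(1 - γ) + 2 * (-√(1 - γ) / (1 + √γ))
        + √(1 - γ) * (-√(1 - γ) / (1 + √γ)) ^ 2 = 0 := by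
      field_simp
      linear_combination √(1 - γ) * (hs + hr)
    have hP := kacMat_mul_pascalMat n ha1 ha2
    rw [charpoly_eq_of_mul_eq_mul hD (diagonal_mul_HAOg n),
      ← charpoly_eq_of_mul_eq_mul (by rw [pascalMat_det]; exact one_ne_zero) hP.symm,
      shiftMat_charpoly,
      Fin.prod_univ_eq_prod_range (fun k : ℕ => (X - C ((2 * (k : ℝ) - n) * √γ) : ℝ[X])),
      ← Finset.prod_range_reflect]
    -- Reversing the order of the factors replaces `2k - n` by `n - 2k`.
    refine Finset.prod_congr rfl fun k hk => ?_
    have hk' : k ≤ n := by simpa [Nat.lt_succ_iff] using hk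
    rw [show n + 1 - 1 - k = n - k by omega, Nat.cast_sub hk']
    congr 2
    push_cast
    ring
  · intro hγ _ k l hkl
    have h := mul_right_cancel₀ (Real.sqrt_pos.2 hγ).ne' hkl
    have h' : ((k : ℕ) : ℝ) = (l : ℕ) := by linarith
    exact Fin.ext (by exact_mod_cast h')
  · rintro rfl k
    simp
end

section
/- For every integer N ≥ 1, the 'Jordan-block match' realization of the quantum phase transition of the third kind is continuous: the matrix-valued function 𝓗 : ℝ → Matrix(N,N,ℂ) defined piecewise by 𝓗(t) = Q_AO⁻¹ · H_AO(−t) · Q_AO for t ≤ 0 and 𝓗(t) = Q_BH⁻¹ · H_BH(1−t) · Q_BH for t > 0 is continuous on all of ℝ, and at the exceptional-point instant it satisfies 𝓗(0) = J; in particular lim_{t→0⁻} 𝓗(t) = lim_{t→0⁺} 𝓗(t) = J, i.e. the two sub-Hamiltonians are matched at t = 0 via the Jordan block. -/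
/-!
Both branches of `Hsys` are similarity transforms of continuous matrix functions, so continuity
reduces to the two branches agreeing at `t = 0`, where both equal the Jordan block `J`.

The two cases are instances of one identity `Hc N c * Qc N c = Qc N c * J` (`Hc_mul_Qc`), with
`c = 1` for the anharmonic oscillator and `c = i` for the Bose–Hubbard model. Write `n = N - 1`.
Conjugating `Hc N c` by the left diagonal factor `diag(c^k √binom(n,k))` of `Qc N c` removes the
square roots (`gCoup_up`, `gCoup_down`) and leaves `c` times the integer tridiagonal matrix with
diagonal `-(n-2k)`, superdiagonal `n-k` and subdiagonal `-(k+1)`. Applied to the Pascal matrix `P`,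
it shifts the columns by one, multiplying by `-(n-q+1)` (`pascal_identity`); this factor is absorbed
by the right diagonal factor `diag((-c)^(n-k) (n-k)!)`. Finally `Qc N c` is invertible for `c ≠ 0`,
since reversing the rows of `P` makes it unitriangular.
-/

open Matrix Polynomial Finset

/-- the complexified anharmonic-oscillator Hamiltonian. -/
noncomputable def HAOc (N : ℕ) (γ : ℝ) : Matrix (Fin N) (Fin N) ℂ :=
  (HAOg N γ).map Complex.ofReal

/-- the piecewise 'Jordan-block match' Hamiltonian of the phase transition. -/
noncomputable def Hsys (N : ℕ) (t : ℝ) : Matrix (Fin N) (Fin N) ℂ :=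
  if t ≤ 0 then (QAO N)⁻¹ * HAOc N (-t) * QAO N
  else (QBH N)⁻¹ * HBH N (1 - (t : ℂ)) * QBH N

lemma sum_fin_ite_val (N j : ℕ) (f : ℕ → ℂ) :
    ∑ l : Fin N, (if (l : ℕ) = j then f l else 0) = if j < N then f j else 0 := by
  rw [Fin.sum_univ_eq_sum_range (fun l => if l = j then f l else 0) N]
  simp [Finset.sum_ite_eq']

/-- A tridiagonal sum over `Fin N`, written as its three terms. -/
lemma sum_fin_tridiag (N k : ℕ) (hk : k < N) (a b : ℂ) (c f : ℕ → ℂ) :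
    ∑ l : Fin N, (if k = (l : ℕ) then a else if (l : ℕ) = k + 1 then b
        else if k = (l : ℕ) + 1 then c l else 0) * f l
      = a * f k + (if k + 1 < N then b * f (k + 1) else 0)
        + (if 1 ≤ k then c (k - 1) * f (k - 1) else 0) := by
  have h : ∀ l : Fin N, (if k = (l : ℕ) then a else if (l : ℕ) = k + 1 then b
        else if k = (l : ℕ) + 1 then c l else 0) * f l
      = (if (l : ℕ) = k then a * f l else 0) + (if (l : ℕ) = k + 1 then b * f l else 0)
        + (if (l : ℕ) = k - 1 then (if 1 ≤ k then c l * f l else 0) else 0) := by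
    intro l
    generalize (l : ℕ) = x
    split_ifs <;> first | omega | simp
  rw [Finset.sum_congr rfl (fun l _ => h l), Finset.sum_add_distrib, Finset.sum_add_distrib,
    sum_fin_ite_val N k (fun l => a * f l), sum_fin_ite_val N (k + 1) (fun l => b * f l),
    sum_fin_ite_val N (k - 1) (fun l => if 1 ≤ k then c l * f l else 0)]
  have : k - 1 < N := by omega
  simp [hk, this]

/-- The tridiagonal matrix with diagonal `-c (N-1-2k)`, superdiagonal `g_k` and subdiagonal
`-c² g_k`, where `g_k = √((N-1-k)(k+1))`. It is the exceptional-point Hamiltonian of the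
anharmonic oscillator for `c = 1` and of the Bose–Hubbard model for `c = i`. -/
noncomputable def Hc (N : ℕ) (c : ℂ) : Matrix (Fin N) (Fin N) ℂ :=
  fun k l =>
    if (k : ℕ) = (l : ℕ) then -c * (((N : ℤ) - 1 - 2 * (k : ℕ) : ℤ) : ℂ)
    else if (l : ℕ) = (k : ℕ) + 1 then (gCoup N k : ℂ)
    else if (k : ℕ) = (l : ℕ) + 1 then -c ^ 2 * (gCoup N l : ℂ)
    else 0

/-- The common form of the transition matrices: `Qc N 1 = Q_AO` and `Qc N i = Q_BH`. -/
noncomputable def Qc (N : ℕ) (c : ℂ) : Matrix (Fin N) (Fin N) ℂ :=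
  Matrix.diagonal (fun k : Fin N => c ^ (k : ℕ) * (Real.sqrt ((N - 1).choose (k : ℕ)) : ℂ))
    * Pmat N *
  Matrix.diagonal
    (fun k : Fin N => (-c) ^ (N - 1 - (k : ℕ)) * ((N - 1 - (k : ℕ)).factorial : ℂ))

lemma Qc_apply (N : ℕ) (c : ℂ) (k l : Fin N) :
    Qc N c k l = (c ^ (k : ℕ) * (Real.sqrt ((N - 1).choose (k : ℕ)) : ℂ))
      * ((N - 1 - (k : ℕ)).choose (l : ℕ) : ℂ)
      * ((-c) ^ (N - 1 - (l : ℕ)) * ((N - 1 - (l : ℕ)).factorial : ℂ)) := by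
  rw [Qc, Matrix.mul_diagonal, Matrix.diagonal_mul, Pmat]

lemma QAO_eq (N : ℕ) : QAO N = Qc N 1 := by
  simp [QAO, Qc, Cmat, Fmat]

lemma QBH_eq (N : ℕ) : QBH N = Qc N Complex.I := rfl

/-- Reversing the rows of `P` gives the lower unitriangular Pascal matrix `binom(m, q)`. -/
lemma Pmat_det_ne_zero (N : ℕ) : (Pmat N).det ≠ 0 := by
  have h : Pmat N = (Matrix.of fun m q : Fin N => (((m : ℕ).choose (q : ℕ) : ℕ) : ℂ)).submatrix
      (Fin.revPerm : Equiv.Perm (Fin N)) id := by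
    ext m q
    simp only [Pmat, Matrix.submatrix_apply, Matrix.of_apply, Fin.revPerm_apply, Fin.val_rev, id]
    rw [show N - 1 - (m : ℕ) = N - ((m : ℕ) + 1) by omega]
  rw [h, Matrix.det_permute, Matrix.det_of_isLowerTriangular]
  · simp
  · intro i j hij
    have : (i : ℕ) < j := hij
    simp [Nat.choose_eq_zero_of_lt this]

lemma Qc_isUnit_det (N : ℕ) (c : ℂ) (hc : c ≠ 0) : IsUnit (Qc N c).det := by
  rw [isUnit_iff_ne_zero, Qc, Matrix.det_mul, Matrix.det_mul, Matrix.det_diagonal,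
    Matrix.det_diagonal]
  refine mul_ne_zero (mul_ne_zero (Finset.prod_ne_zero_iff.2 fun k _ => ?_)
    (Pmat_det_ne_zero N)) (Finset.prod_ne_zero_iff.2 fun k _ => ?_)
  · refine mul_ne_zero (pow_ne_zero _ hc) ?_
    have : 0 < (N - 1).choose (k : ℕ) := Nat.choose_pos (by omega)
    have h : (0 : ℝ) < ((N - 1).choose (k : ℕ) : ℝ) := by exact_mod_cast this
    exact_mod_cast (Real.sqrt_pos.2 h).ne'
  · exact mul_ne_zero (pow_ne_zero _ (neg_ne_zero.2 hc)) (by exact_mod_cast Nat.factorial_ne_zero _)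

/-- `g_k √binom(n,k+1) = (n-k) √binom(n,k)`, in the variables `n = k + r + 1`. -/
lemma gCoup_up (k r : ℕ) :
    Real.sqrt (((r + 1) * (k + 1) : ℕ)) * Real.sqrt ((k + r + 1).choose (k + 1))
      = (r + 1) * Real.sqrt ((k + r + 1).choose k) := by
  have h : (k + r + 1).choose (k + 1) * (k + 1) = (k + r + 1).choose k * (r + 1) := by
    rw [Nat.choose_succ_right_eq]; congr 1; omega
  have h' : ((k + r + 1).choose (k + 1) : ℝ) * (k + 1) = (k + r + 1).choose k * (r + 1) := by
    exact_mod_cast h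
  rw [← Real.sqrt_mul (by positivity)]
  have : (((r + 1) * (k + 1) : ℕ) : ℝ) * ((k + r + 1).choose (k + 1))
      = (r + 1) ^ 2 * ((k + r + 1).choose k) := by
    push_cast; linear_combination (r + 1 : ℝ) * h'
  rw [this, Real.sqrt_mul (by positivity), Real.sqrt_sq (by positivity)]

/-- `g_k √binom(n,k) = (k+1) √binom(n,k+1)`, in the variables `n = k + r + 1`. -/
lemma gCoup_down (k r : ℕ) :
    Real.sqrt (((r + 1) * (k + 1) : ℕ)) * Real.sqrt ((k + r + 1).choose k)
      = (k + 1) * Real.sqrt ((k + r + 1).choose (k + 1)) := by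
  have h : (k + r + 1).choose (k + 1) * (k + 1) = (k + r + 1).choose k * (r + 1) := by
    rw [Nat.choose_succ_right_eq]; congr 1; omega
  have h' : ((k + r + 1).choose (k + 1) : ℝ) * (k + 1) = (k + r + 1).choose k * (r + 1) := by
    exact_mod_cast h
  rw [← Real.sqrt_mul (by positivity)]
  have : (((r + 1) * (k + 1) : ℕ) : ℝ) * ((k + r + 1).choose k)
      = (k + 1) ^ 2 * ((k + r + 1).choose (k + 1)) := by
    push_cast; linear_combination -(k + 1 : ℝ) * h'
  rw [this, Real.sqrt_mul (by positivity), Real.sqrt_sq (by positivity)]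

/-- The conjugated Hamiltonian shifts the columns of `P`: with `a = n - m`, the combination of the
rows `m - 1`, `m`, `m + 1` in column `q` is a multiple of the entry in column `q - 1`. This is
Pascal's rule together with `a binom(a-1,q-1) = (a-q+1) binom(a,q-1)`. -/
lemma pascal_identity (a m q : ℕ) :
    (a : ℂ) * ((a.choose q : ℂ) - ((a - 1).choose q : ℂ))
        + m * (((a + 1).choose q : ℂ) - (a.choose q : ℂ))
      = if q = 0 then 0 else ((a : ℂ) + m - q + 1) * (a.choose (q - 1) : ℂ) := by
  cases q with
  | zero => simp
  | succ q =>
    simp only [Nat.add_sub_cancel, Nat.succ_ne_zero, if_false]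
    have h2 : ((a + 1).choose (q + 1) : ℂ) = a.choose q + a.choose (q + 1) := by
      exact_mod_cast Nat.choose_succ_succ a q
    rw [h2]
    cases a with
    | zero =>
      cases q with
      | zero => simp
      | succ q => simp
    | succ b =>
      have h1 : ((b + 1).choose (q + 1) : ℂ) = b.choose q + b.choose (q + 1) := by
        exact_mod_cast Nat.choose_succ_succ b q
      have h3 : ((b + 1 : ℕ) : ℂ) * b.choose q = ((b + 1).choose q : ℂ) * ((b : ℂ) + 1 - q) := by
        by_cases hq : q ≤ b + 1
        · have h5 : (b + 1) * b.choose q = (b + 1).choose q * (b + 1 - q) :=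
            (Nat.add_one_mul_choose_eq b q).trans (Nat.choose_succ_right_eq (b + 1) q)
          have h6 : ((b + 1 - q : ℕ) : ℂ) = (b : ℂ) + 1 - q := by
            rw [Nat.cast_sub hq]; push_cast; ring
          rw [← h6]; exact_mod_cast h5
        · rw [Nat.choose_eq_zero_of_lt (by omega), Nat.choose_eq_zero_of_lt (by omega)]; simp
      rw [h1]
      simp only [Nat.add_sub_cancel]
      push_cast at h3 ⊢
      linear_combination h3

lemma Hc_mul_Qc (N : ℕ) (c : ℂ) : Hc N c * Qc N c = Qc N c * Jmat N := by
  ext m q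
  obtain ⟨m, hm⟩ := m
  obtain ⟨q, hq⟩ := q
  rw [Matrix.mul_apply, Matrix.mul_apply]
  simp only [Qc_apply]
  simp only [Hc, Jmat]
  rw [sum_fin_tridiag N m hm (-c * (((N : ℤ) - 1 - 2 * (m : ℕ) : ℤ) : ℂ)) (gCoup N m : ℂ)
    (fun l => -c ^ 2 * (gCoup N l : ℂ))
    (fun k => (c ^ k * (Real.sqrt ((N - 1).choose k) : ℂ))
      * ((N - 1 - k).choose q : ℂ)
      * ((-c) ^ (N - 1 - q) * ((N - 1 - q).factorial : ℂ)))]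
  -- the column index of the only surviving term on the right is `q - 1`, absent for `q = 0`
  have hR : ∑ l : Fin N, (c ^ m * (Real.sqrt ((N - 1).choose m) : ℂ))
      * ((N - 1 - m).choose (l : ℕ) : ℂ)
      * ((-c) ^ (N - 1 - (l : ℕ)) * ((N - 1 - (l : ℕ)).factorial : ℂ))
      * (if q = (l : ℕ) + 1 then 1 else 0)
      = (c ^ m * (Real.sqrt ((N - 1).choose m) : ℂ)) * (-c) *
        ((-c) ^ (N - 1 - q) * ((N - 1 - q).factorial : ℂ)) *
        (if q = 0 then 0 else (((N - 1 - m : ℕ) : ℂ) + m - q + 1)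
          * ((N - 1 - m).choose (q - 1) : ℂ)) := by
    cases q with
    | zero => simp
    | succ q =>
      have := sum_fin_ite_val N q (fun l => (c ^ m * (Real.sqrt ((N - 1).choose m) : ℂ))
        * ((N - 1 - m).choose l : ℂ) * ((-c) ^ (N - 1 - l) * ((N - 1 - l).factorial : ℂ)))
      rw [if_pos (by omega)] at this
      have h2 : ∀ l : Fin N, (q + 1 = (l : ℕ) + 1) ↔ ((l : ℕ) = q) := by intro l; omega
      simp only [mul_ite, mul_one, mul_zero, h2]
      rw [this]
      obtain ⟨s, rfl⟩ : ∃ s, N = q + s + 2 := ⟨N - q - 2, by omega⟩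
      obtain ⟨a, ha⟩ : ∃ a, q + s + 1 = a + m := ⟨q + s + 1 - m, by omega⟩
      have e1 : q + s + 2 - 1 - q = s + 1 := by omega
      have e2 : q + s + 2 - 1 - (q + 1) = s := by omega
      have e3 : q + s + 2 - 1 - m = a := by omega
      have e4 : (q : ℂ) + s + 1 = a + m := by exact_mod_cast ha
      rw [e1, e2, e3, Nat.factorial_succ, pow_succ]
      simp only [Nat.succ_ne_zero, if_false, Nat.add_sub_cancel]
      have e5 : (a : ℂ) + m - ((q + 1 : ℕ) : ℂ) + 1 = s + 1 := by
        rw [← e4]; push_cast; ring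
      rw [e5]; push_cast; ring
  rw [hR, ← pascal_identity]
  generalize ((-c) ^ (N - 1 - q) * ((N - 1 - q).factorial : ℂ)) = S
  -- the two off-diagonal terms after conjugation by the diagonal factor
  have hup : (if m + 1 < N then (gCoup N m : ℂ) * ((c ^ (m + 1)
        * (Real.sqrt ((N - 1).choose (m + 1)) : ℂ)) * ((N - 1 - (m + 1)).choose q : ℂ) * S) else 0)
      = c ^ m * (Real.sqrt ((N - 1).choose m) : ℂ) * c * S
        * (((N - 1 - m : ℕ) : ℂ) * ((N - 1 - m - 1).choose q : ℂ)) := by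
    split_ifs with h
    · obtain ⟨r, rfl⟩ : ∃ r, N = m + r + 2 := ⟨N - m - 2, by omega⟩
      have e1 : m + r + 2 - 1 - m = r + 1 := by omega
      have e2 : m + r + 2 - 1 - (m + 1) = r := by omega
      have e3 : m + r + 2 - 1 = m + r + 1 := by omega
      have := congrArg (fun x : ℝ => (x : ℂ)) (gCoup_up m r)
      rw [gCoup, e1, e2, e3]
      simp only [Nat.add_sub_cancel]
      push_cast at this ⊢
      linear_combination (c ^ (m + 1) * (r.choose q : ℂ) * S) * this
    · have : N - 1 - m = 0 := by omega
      simp [this]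
  have hdown : (if 1 ≤ m then -c ^ 2 * (gCoup N (m - 1) : ℂ) * ((c ^ (m - 1)
        * (Real.sqrt ((N - 1).choose (m - 1)) : ℂ)) * ((N - 1 - (m - 1)).choose q : ℂ) * S) else 0)
      = - (c ^ m * (Real.sqrt ((N - 1).choose m) : ℂ) * c * S
        * ((m : ℂ) * ((N - 1 - m + 1).choose q : ℂ))) := by
    cases m with
    | zero => simp
    | succ k =>
      obtain ⟨r, rfl⟩ : ∃ r, N = k + r + 2 := ⟨N - k - 2, by omega⟩
      have e1 : k + r + 2 - 1 - k = r + 1 := by omega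
      have e2 : k + r + 2 - 1 - (k + 1) = r := by omega
      have e3 : k + r + 2 - 1 = k + r + 1 := by omega
      have := congrArg (fun x : ℝ => (x : ℂ)) (gCoup_down k r)
      simp only [Nat.add_sub_cancel, Nat.le_add_left, if_true]
      rw [gCoup, e1, e2, e3]
      push_cast at this ⊢
      linear_combination (-c ^ 2 * c ^ k * ((r + 1).choose q : ℂ) * S) * this
  have hd : (((N : ℤ) - 1 - 2 * (m : ℕ) : ℤ) : ℂ) = ((N - 1 - m : ℕ) : ℂ) - m := by
    have : (N : ℤ) - 1 - 2 * (m : ℕ) = ((N - 1 - m : ℕ) : ℤ) - m := by omega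
    rw [this]; push_cast; ring
  simp only [hup, hdown, hd]
  ring

lemma Qc_conj (N : ℕ) (c : ℂ) (hc : c ≠ 0) : (Qc N c)⁻¹ * Hc N c * Qc N c = Jmat N := by
  rw [Matrix.mul_assoc, Hc_mul_Qc, ← Matrix.mul_assoc,
    Matrix.nonsing_inv_mul _ (Qc_isUnit_det N c hc), Matrix.one_mul]

lemma HAOc_zero (N : ℕ) : HAOc N 0 = Hc N 1 := by
  ext k l
  simp only [HAOc, HAOg, Hc, Matrix.map_apply, gCoup]
  split_ifs <;> push_cast <;> simp

lemma HBH_one (N : ℕ) : HBH N 1 = Hc N Complex.I := by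
  ext k l
  simp only [HBH, Hc]
  split_ifs <;> simp

lemma continuous_HAOc (N : ℕ) : Continuous (HAOc N) := by
  refine continuous_matrix fun k l => ?_
  simp only [HAOc, HAOg, Matrix.map_apply]
  split_ifs <;> fun_prop

lemma continuous_HBH (N : ℕ) : Continuous (HBH N) := by
  refine continuous_matrix fun k l => ?_
  simp only [HBH]
  split_ifs <;> fun_prop

/-- the 'Jordan-block match' realization is continuous on all of `ℝ`,
equals `J` at the exceptional-point instant `t = 0`, and both one-sided limits at
`t = 0` equal `J`. -/
theorem jordan_match_continuous (N : ℕ) (hN : 1 ≤ N) :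
    Continuous (Hsys N) ∧ Hsys N 0 = Jmat N ∧
      Filter.Tendsto (Hsys N) (nhdsWithin 0 (Set.Iio 0)) (nhds (Jmat N)) ∧
      Filter.Tendsto (Hsys N) (nhdsWithin 0 (Set.Ioi 0)) (nhds (Jmat N)) := by
  have hA : (QAO N)⁻¹ * HAOc N 0 * QAO N = Jmat N := by
    rw [HAOc_zero, QAO_eq, Qc_conj N 1 one_ne_zero]
  have hB : (QBH N)⁻¹ * HBH N 1 * QBH N = Jmat N := by
    rw [HBH_one, QBH_eq, Qc_conj N _ Complex.I_ne_zero]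
  have h0 : Hsys N 0 = Jmat N := by simpa [Hsys] using hA
  have hc : Continuous (Hsys N) := by
    unfold Hsys
    refine Continuous.if_le ?_ ?_ continuous_id continuous_const ?_
    · have := (continuous_HAOc N).comp continuous_neg
      exact (continuous_const.matrix_mul this).matrix_mul continuous_const
    · have : Continuous fun t : ℝ => HBH N (1 - (t : ℂ)) :=
        (continuous_HBH N).comp (continuous_const.sub Complex.continuous_ofReal)
      exact (continuous_const.matrix_mul this).matrix_mul continuous_const
    · intro t ht
      have ht' : t = 0 := ht
      subst ht'
      simp [hA, hB]
  have hlim : Filter.Tendsto (Hsys N) (nhds 0) (nhds (Jmat N)) := h0 ▸ hc.tendsto 0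
  exact ⟨hc, h0, hlim.mono_left nhdsWithin_le_nhds, hlim.mono_left nhdsWithin_le_nhds⟩
end
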